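/- Let a0 ∈ ℝ^k and λ > 0. For every a ∈ ℝ^k, the infimum defining φ̂(a) is attained at the unique minimizer x*(a) = S_λ((Č_{a0})* ι a) = S_λ((C_{ι a})* ι a0), and the marginal objective has the closed form φ̂(a) = ½‖ι a0‖₂² − ½‖S_λ((Č_{a0})* ι a)‖₂². -/

import Mathlib

open scoped BigOperators Matrix

attribute [local instance 10] Classical.propDecidable

noncomputable section

/-- The index `t mod m` as an element of `Fin m`. -/
def idx (m : ℕ) [NeZero m] (t : ℤ) : Fin m :=
  ⟨(t % (m : ℤ)).toNat, by
    have hm : 0 < m := Nat.pos_of_ne_zero (NeZero.ne m)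
    have hm' : (0 : ℤ) < (m : ℤ) := by exact_mod_cast hm
    have h1 : 0 ≤ t % (m : ℤ) := Int.emod_nonneg t (ne_of_gt hm')
    have h2 : t % (m : ℤ) < (m : ℤ) := Int.emod_lt_of_pos t hm'
    omega⟩

/-- Cyclic shift: `(cshift τ v) i = v ((i - τ) mod m)`. -/
def cshift {m : ℕ} [NeZero m] (τ : ℤ) (v : Fin m → ℝ) : Fin m → ℝ :=
  fun i => v (idx m ((i : ℤ) - τ))

/-- Zero padding `ι : ℝ^k → ℝ^m`. -/
def pad (k m : ℕ) (a : Fin k → ℝ) : Fin m → ℝ :=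
  fun i => if h : (i : ℕ) < k then a ⟨i, h⟩ else 0

/-- Restriction to the first `k` coordinates, `ι* : ℝ^m → ℝ^k`. -/
def unpad {k m : ℕ} (h : k ≤ m) (v : Fin m → ℝ) : Fin k → ℝ :=
  fun j => v (Fin.castLE h j)

/-- Circulant matrix `C_w` whose `j`-th column is `s_j[w]`. -/
def circ {m : ℕ} [NeZero m] (w : Fin m → ℝ) : Matrix (Fin m) (Fin m) ℝ :=
  Matrix.of fun i j => cshift (j : ℤ) w i

/-- Reversed circulant matrix `Č_{a0}` whose `j`-th column is `s_{-j}[ι a0]`. -/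
def rcirc (k m : ℕ) [NeZero m] (a0 : Fin k → ℝ) : Matrix (Fin m) (Fin m) ℝ :=
  Matrix.of fun i j => cshift (-(j : ℤ)) (pad k m a0) i

/-- Circular convolution `w ⊛ x = C_w x`. -/
def conv {m : ℕ} [NeZero m] (w x : Fin m → ℝ) : Fin m → ℝ := (circ w).mulVec x

def dotp {α : Type*} [Fintype α] (u v : α → ℝ) : ℝ := ∑ i, u i * v i

def l2sq {α : Type*} [Fintype α] (v : α → ℝ) : ℝ := ∑ i, v i ^ 2

def l2norm {α : Type*} [Fintype α] (v : α → ℝ) : ℝ := Real.sqrt (l2sq v)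

def l1norm {α : Type*} [Fintype α] (v : α → ℝ) : ℝ := ∑ i, |v i|

/-- Scalar soft-thresholding. -/
def soft (lam t : ℝ) : ℝ := Real.sign t * max (|t| - lam) 0

/-- Entrywise soft-thresholding `S_λ`. -/
def softvec {m : ℕ} (lam : ℝ) (u : Fin m → ℝ) : Fin m → ℝ := fun i => soft lam (u i)

/-- The shift truncation `ι* s_{-τ}[ι a0] ∈ ℝ^k`. -/
def shiftTrunc {k m : ℕ} [NeZero m] (h : k ≤ m) (a0 : Fin k → ℝ) (τ : Fin m) : Fin k → ℝ :=
  unpad h (cshift (-(τ : ℤ)) (pad k m a0))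

/-- The inner objective of the simplified marginal problem. -/
def phiHatInner (k m : ℕ) [NeZero m] (lam : ℝ) (a0 a : Fin k → ℝ) (x : Fin m → ℝ) : ℝ :=
  l2sq (pad k m a0) / 2 + l2sq x / 2 - dotp (conv (pad k m a) x) (pad k m a0) + lam * l1norm x

/-- The simplified marginal objective `φ̂`. -/
def phiHat (k m : ℕ) [NeZero m] (lam : ℝ) (a0 a : Fin k → ℝ) : ℝ :=
  sInf (Set.range (phiHatInner k m lam a0 a))

/-- Zero-padding `ι` as an `m × k` matrix. -/
def padM (k m : ℕ) : Matrix (Fin m) (Fin k) ℝ :=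
  Matrix.of fun i j => if (i : ℕ) = (j : ℕ) then 1 else 0

/-- The diagonal 0/1 projection matrix `P_I`. -/
def projM {m : ℕ} (I : Set (Fin m)) : Matrix (Fin m) (Fin m) ℝ :=
  Matrix.of fun i j => if i = j ∧ i ∈ I then 1 else 0

/-- The `ℓ² → ℓ²` operator norm of a matrix. -/
def opNorm {α β : Type*} [Fintype α] [Fintype β] (A : Matrix α β ℝ) : ℝ :=
  sSup {c | ∃ v : β → ℝ, l2norm v = 1 ∧ c = l2norm (A.mulVec v)}

/-- The `ℓ² → ℓ∞` operator norm of a matrix. -/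
def l2linfNorm {α β : Type*} [Fintype α] [Fintype β] (A : Matrix α β ℝ) : ℝ :=
  sSup {c | ∃ v : β → ℝ, l2norm v = 1 ∧ c = sSup {d | ∃ i, d = |A.mulVec v i|}}

/-- The smallest eigenvalue of a symmetric matrix, via the Rayleigh quotient. -/
def lamMin {n : ℕ} (A : Matrix (Fin n) (Fin n) ℝ) : ℝ :=
  sInf {c | ∃ v : Fin n → ℝ, l2sq v = 1 ∧ c = dotp v (A.mulVec v)}

/-- `‖v‖_p^p = ∑ |v i|^p` for a real exponent `p`. -/
def lpPow {α : Type*} [Fintype α] (p : ℝ) (v : α → ℝ) : ℝ := ∑ i, |v i| ^ p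

/-- The `ℓ^p` norm with real exponent `p`. -/
def lpNorm {α : Type*} [Fintype α] (p : ℝ) (v : α → ℝ) : ℝ := (lpPow p v) ^ (1 / p)

/-- The continuous linear functional `v ↦ ⟨g, v⟩` on `ℝ^n`. -/
def dotCLM {n : ℕ} (g : Fin n → ℝ) : (Fin n → ℝ) →L[ℝ] ℝ :=
  LinearMap.toContinuousLinearMap
    { toFun := fun v => dotp g v
      map_add' := fun x y => by
        simp [dotp, mul_add, Finset.sum_add_distrib]
      map_smul' := fun c x => by
        simp only [dotp, Pi.smul_apply, smul_eq_mul, RingHom.id_apply, Finset.mul_sum]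
        exact Finset.sum_congr rfl fun i _ => by ring }

/-!
Since `⟨(ι a) ⊛ x, ι a0⟩ = ⟨(C_{ι a})* ι a0, x⟩`, the inner problem is, up to the constant
`½‖ι a0‖₂²`, the separable proximal problem `½‖x‖₂² − ⟨b, x⟩ + λ‖x‖₁` with `b = (C_{ι a})* ι a0`.
In each coordinate `b − S_λ(b)` is a subgradient of `λ|·|` at `S_λ(b)`, which makes `S_λ(b)`
optimal; strong convexity of the quadratic gives uniqueness. The two formulas for `b` agree by a
cyclic change of the summation index.
-/

section CyclicShift

variable {m : ℕ} [NeZero m]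

theorem val_idx (t : ℤ) : ((idx m t : Fin m) : ℤ) = t % m :=
  Int.toNat_of_nonneg (Int.emod_nonneg t (by exact_mod_cast NeZero.ne m))

theorem idx_add (i j : Fin m) : idx m ((i : ℤ) + j) = i + j := by
  have val_eq : ((idx m ((i : ℤ) + j) : Fin m) : ℤ) = ((i + j : Fin m) : ℤ) := by
    rw [val_idx, Fin.val_add, Int.natCast_mod, Nat.cast_add]
  exact Fin.ext (by exact_mod_cast val_eq)

theorem idx_sub (i j : Fin m) : idx m ((i : ℤ) - j) = i - j := by
  have val_eq : ((idx m ((i : ℤ) - j) : Fin m) : ℤ) = ((i - j : Fin m) : ℤ) := by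
    rw [val_idx, Fin.val_sub, Int.natCast_mod, Nat.cast_add, Nat.cast_sub j.isLt.le,
      sub_add_eq_add_sub, add_sub_assoc, Int.add_emod_left]
  exact Fin.ext (by exact_mod_cast val_eq)

theorem circ_eq_circulant (w : Fin m → ℝ) : circ w = Matrix.circulant w := by
  ext i j
  exact congrArg w (idx_sub i j)

theorem rcirc_apply {k : ℕ} (a : Fin k → ℝ) (i j : Fin m) :
    rcirc k m a i j = pad k m a (i + j) :=
  congrArg (pad k m a) (by rw [sub_neg_eq_add, idx_add])

theorem transpose_rcirc_mulVec {k : ℕ} (a : Fin k → ℝ) (v : Fin m → ℝ) :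
    (rcirc k m a)ᵀ *ᵥ v = (circ v)ᵀ *ᵥ pad k m a := by
  ext j
  calc ∑ i, rcirc k m a i j * v i
      = ∑ i, pad k m a (i + j) * v (i + j - j) := by
        simp only [rcirc_apply, add_sub_cancel_right]
    _ = ∑ i, pad k m a i * v (i - j) :=
        Equiv.sum_comp (Equiv.addRight j) fun i => pad k m a i * v (i - j)
    _ = ∑ i, circ v i j * pad k m a i := by
        simp only [circ_eq_circulant, Matrix.circulant_apply, mul_comm]

end CyclicShift

section SoftThreshold

variable {lam t : ℝ}

theorem soft_of_abs_le (h : |t| ≤ lam) : soft lam t = 0 := by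
  rw [soft, max_eq_right (sub_nonpos.mpr h), mul_zero]

theorem soft_of_le_abs (h : lam ≤ |t|) : soft lam t = Real.sign t * (|t| - lam) := by
  rw [soft, max_eq_left (sub_nonneg.mpr h)]

theorem sub_soft_of_le_abs (h : lam ≤ |t|) : t - soft lam t = Real.sign t * lam := by
  have sign_mul_abs : Real.sign t * |t| = t := by
    rcases lt_trichotomy t 0 with ht | rfl | ht
    · rw [Real.sign_of_neg ht, abs_of_neg ht, neg_one_mul, neg_neg]
    · rw [abs_zero, mul_zero]
    · rw [Real.sign_of_pos ht, abs_of_pos ht, one_mul]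
  rw [soft_of_le_abs h, mul_sub, sign_mul_abs, sub_sub_cancel]

theorem abs_sub_soft_le (hlam : 0 ≤ lam) (t : ℝ) : |t - soft lam t| ≤ lam := by
  rcases le_total |t| lam with h | h
  · rwa [soft_of_abs_le h, sub_zero]
  · rw [sub_soft_of_le_abs h]
    rcases Real.sign_apply_eq t with hs | hs | hs <;> simp [hs, hlam, abs_of_nonneg]

theorem sub_soft_mul_soft (lam t : ℝ) : (t - soft lam t) * soft lam t = lam * |soft lam t| := by
  rcases le_total |t| lam with h | h
  · rw [soft_of_abs_le h, abs_zero, mul_zero, mul_zero]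
  · have sign_mul_sign : Real.sign t * Real.sign t = |Real.sign t| := by
      rcases Real.sign_apply_eq t with hs | hs | hs <;> simp [hs]
    rw [sub_soft_of_le_abs h, soft_of_le_abs h, abs_mul, abs_of_nonneg (sub_nonneg.mpr h)]
    linear_combination lam * (|t| - lam) * sign_mul_sign

theorem soft_prox_add_sq_le (hlam : 0 ≤ lam) (t x : ℝ) :
    -(soft lam t ^ 2 / 2) + (x - soft lam t) ^ 2 / 2 ≤ x ^ 2 / 2 - t * x + lam * |x| := by
  have subgradient : (t - soft lam t) * x ≤ lam * |x| :=
    calc (t - soft lam t) * x ≤ |t - soft lam t| * |x| := (le_abs_self _).trans_eq (abs_mul _ _)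
      _ ≤ lam * |x| := by gcongr; exact abs_sub_soft_le hlam t
  linear_combination subgradient

end SoftThreshold

section Proximal

theorem l2sq_nonneg {α : Type*} [Fintype α] (v : α → ℝ) : 0 ≤ l2sq v :=
  Finset.sum_nonneg fun i _ => sq_nonneg (v i)

theorem l2sq_pos {α : Type*} [Fintype α] {v : α → ℝ} (hv : v ≠ 0) : 0 < l2sq v := by
  obtain ⟨i, hi⟩ := Function.ne_iff.mp hv
  exact Finset.sum_pos' (fun j _ => sq_nonneg (v j)) ⟨i, Finset.mem_univ i, sq_pos_of_ne_zero hi⟩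

/-- The objective `½‖x‖₂² − ⟨b, x⟩ + λ‖x‖₁` whose minimizer is the proximal point of `λ‖·‖₁` at `b`.
It is `½‖x − b‖₂² + λ‖x‖₁` without the constant `½‖b‖₂²`. -/
def l1ProxObjective {α : Type*} [Fintype α] (lam : ℝ) (b x : α → ℝ) : ℝ :=
  l2sq x / 2 - dotp b x + lam * l1norm x

theorem l1ProxObjective_eq_sum {α : Type*} [Fintype α] (lam : ℝ) (b x : α → ℝ) :
    l1ProxObjective lam b x = ∑ i, (x i ^ 2 / 2 - b i * x i + lam * |x i|) := by
  rw [Finset.sum_add_distrib, Finset.sum_sub_distrib, ← Finset.sum_div, ← Finset.mul_sum]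
  rfl

variable {m : ℕ} {lam : ℝ}

theorem l1ProxObjective_softvec (lam : ℝ) (b : Fin m → ℝ) :
    l1ProxObjective lam b (softvec lam b) = -(l2sq (softvec lam b) / 2) := by
  rw [l1ProxObjective_eq_sum, l2sq, Finset.sum_div, ← Finset.sum_neg_distrib]
  refine Finset.sum_congr rfl fun i _ => ?_
  simp only [softvec]
  linear_combination -sub_soft_mul_soft lam (b i)

theorem l1ProxObjective_softvec_add_le (hlam : 0 ≤ lam) (b x : Fin m → ℝ) :
    l1ProxObjective lam b (softvec lam b) + l2sq (x - softvec lam b) / 2 ≤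
      l1ProxObjective lam b x := by
  rw [l1ProxObjective_softvec, l1ProxObjective_eq_sum, l2sq, l2sq, Finset.sum_div, Finset.sum_div,
    ← Finset.sum_neg_distrib, ← Finset.sum_add_distrib]
  exact Finset.sum_le_sum fun i _ => soft_prox_add_sq_le hlam (b i) (x i)

theorem l1ProxObjective_softvec_le (hlam : 0 ≤ lam) (b x : Fin m → ℝ) :
    l1ProxObjective lam b (softvec lam b) ≤ l1ProxObjective lam b x := by
  linarith [l1ProxObjective_softvec_add_le hlam b x, l2sq_nonneg (x - softvec lam b)]

theorem l1ProxObjective_softvec_lt (hlam : 0 ≤ lam) {b x : Fin m → ℝ} (hx : x ≠ softvec lam b) :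
    l1ProxObjective lam b (softvec lam b) < l1ProxObjective lam b x := by
  linarith [l1ProxObjective_softvec_add_le hlam b x, l2sq_pos (sub_ne_zero.mpr hx)]

end Proximal

section MarginalObjective

theorem dotp_mulVec {α β : Type*} [Fintype α] [Fintype β] (A : Matrix α β ℝ) (x : β → ℝ)
    (y : α → ℝ) : dotp (A *ᵥ x) y = dotp (Aᵀ *ᵥ y) x := by
  change A *ᵥ x ⬝ᵥ y = Aᵀ *ᵥ y ⬝ᵥ x
  rw [Matrix.mulVec_transpose, ← Matrix.dotProduct_mulVec, dotProduct_comm]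

variable {k m : ℕ} [NeZero m]

theorem phiHatInner_eq_add_l1ProxObjective (lam : ℝ) (a0 a : Fin k → ℝ) (x : Fin m → ℝ) :
    phiHatInner k m lam a0 a x =
      l2sq (pad k m a0) / 2 + l1ProxObjective lam ((rcirc k m a0)ᵀ *ᵥ pad k m a) x := by
  rw [transpose_rcirc_mulVec, phiHatInner, conv, dotp_mulVec, l1ProxObjective]
  ring

theorem phiHat_eq_of_forall_le {lam : ℝ} {a0 a : Fin k → ℝ} {x₀ : Fin m → ℝ}
    (h : ∀ x, phiHatInner k m lam a0 a x₀ ≤ phiHatInner k m lam a0 a x) :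
    phiHat k m lam a0 a = phiHatInner k m lam a0 a x₀ :=
  IsLeast.csInf_eq ⟨Set.mem_range_self x₀, Set.forall_mem_range.mpr h⟩

end MarginalObjective

/-- the inner problem defining `φ̂(a)` is uniquely minimized at
`x*(a) = S_λ((Č_{a0})* ι a) = S_λ((C_{ι a})* ι a0)`, and
`φ̂(a) = ½‖ι a0‖₂² − ½‖S_λ((Č_{a0})* ι a)‖₂²`. -/
theorem stmt_1 {k m : ℕ} [NeZero m] (hkm : k ≤ m) (lam : ℝ) (hlam : 0 < lam)
    (a0 a : Fin k → ℝ) :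
    let xstar : Fin m → ℝ := softvec lam (((rcirc k m a0)ᵀ).mulVec (pad k m a))
    xstar = softvec lam (((circ (pad k m a))ᵀ).mulVec (pad k m a0)) ∧
    (∀ x : Fin m → ℝ, phiHatInner k m lam a0 a xstar ≤ phiHatInner k m lam a0 a x) ∧
    (∀ x : Fin m → ℝ, x ≠ xstar →
      phiHatInner k m lam a0 a xstar < phiHatInner k m lam a0 a x) ∧
    phiHat k m lam a0 a = l2sq (pad k m a0) / 2 - l2sq xstar / 2 := by
  intro xstar
  have minimal (x : Fin m → ℝ) :
      phiHatInner k m lam a0 a xstar ≤ phiHatInner k m lam a0 a x := by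
    simp only [phiHatInner_eq_add_l1ProxObjective]
    gcongr
    exact l1ProxObjective_softvec_le hlam.le _ x
  refine ⟨congrArg (softvec lam) (transpose_rcirc_mulVec a0 _), minimal, fun x hx => ?_, ?_⟩
  · simp only [phiHatInner_eq_add_l1ProxObjective]
    gcongr
    exact l1ProxObjective_softvec_lt hlam.le hx
  · rw [phiHat_eq_of_forall_le minimal, phiHatInner_eq_add_l1ProxObjective,
      l1ProxObjective_softvec, sub_eq_add_neg]

end
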